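/- arXiv:2102.05082 — 2 statements merged into one kernel-verified Lean document; each statement's English description precedes it below -/
import Mathlib

section
/- Suppose there exists a representation kernel q : X → Z → ℝ that satisfies both the marginal alignment condition (for all domains d, d' and all z, pZ d z = pZ d' z) and the conditional alignment condition (for all domains d, d', all labels y and all z with pZ d z > 0, pYZ d y z * pZ d' z = pYZ d' y z * pZ d z). Then the label distribution is invariant across domains: for all domains d, d' and all labels y, pY d y = pY d' y. -/
/-!
The joints `pYZ d y z` agree across domains pointwise: where the common marginal `pZ` is positive
it cancels from the conditional alignment equation, and where it is zero both joints vanish since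
`0 ≤ pYZ d y z ≤ pZ d z`. Summing over `z` recovers `pY d y`, because `q x` and `pX d y` have
total mass one.
-/

/-- If a representation kernel satisfies both the marginal alignment condition and the
conditional alignment condition, then the label distribution is invariant across domains. -/
theorem label_invariance_of_alignment
    {D Y Z X : Type*} [Fintype D] [Fintype Y] [Fintype Z] [Fintype X]
    (pY : D → Y → ℝ) (pX : D → Y → X → ℝ) (q : X → Z → ℝ)
    (hpY_nonneg : ∀ d y, 0 ≤ pY d y) (hpY_sum : ∀ d, ∑ y, pY d y = 1)
    (hpX_nonneg : ∀ d y x, 0 ≤ pX d y x) (hpX_sum : ∀ d y, ∑ x, pX d y x = 1)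
    (hq_nonneg : ∀ x z, 0 ≤ q x z) (hq_sum : ∀ x, ∑ z, q x z = 1)
    (pZ : D → Z → ℝ) (hpZ : ∀ d z, pZ d z = ∑ y, ∑ x, pY d y * pX d y x * q x z)
    (pYZ : D → Y → Z → ℝ) (hpYZ : ∀ d y z, pYZ d y z = ∑ x, pY d y * pX d y x * q x z)
    (hmarg : ∀ d d' z, pZ d z = pZ d' z)
    (hcond : ∀ d d' y z, 0 < pZ d z → pYZ d y z * pZ d' z = pYZ d' y z * pZ d z) :
    ∀ d d' y, pY d y = pY d' y := by
  have hnn : ∀ d y z, 0 ≤ pYZ d y z := fun d y z => by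
    rw [hpYZ]
    exact Finset.sum_nonneg fun x _ =>
      mul_nonneg (mul_nonneg (hpY_nonneg d y) (hpX_nonneg d y x)) (hq_nonneg x z)
  have hZ : ∀ d z, pZ d z = ∑ y, pYZ d y z := fun d z => by
    simp only [hpZ, hpYZ]
  have hle : ∀ d y z, pYZ d y z ≤ pZ d z := fun d y z => by
    rw [hZ]
    exact Finset.single_le_sum (f := fun y => pYZ d y z) (fun y _ => hnn d y z)
      (Finset.mem_univ y)
  have hY : ∀ d y, pY d y = ∑ z, pYZ d y z := fun d y => by
    simp only [hpYZ]
    rw [Finset.sum_comm]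
    simp only [← Finset.mul_sum, hq_sum, hpX_sum, mul_one]
  intro d d' y
  rw [hY, hY]
  refine Finset.sum_congr rfl fun z _ => ?_
  -- Where the common marginal vanishes, both joints are squeezed between `0` and `0`.
  rcases ((hnn d y z).trans (hle d y z)).lt_or_eq with hpos | hzero
  · have h := hcond d d' y z hpos
    rw [hmarg d' d z] at h
    exact mul_right_cancel₀ hpos.ne' h
  · have h := hmarg d d' z
    linarith [hnn d y z, hle d y z, hnn d' y z, hle d' y z]
end

section
/- Suppose f : X ≃ X is a bijection of the finite data space that transports each class-conditional data distribution of domain d to that of domain d', in the sense that pX d y x = pX d' y (f x) for all y and x, and suppose the label distribution is invariant: pY d y = pY d' y for all y. Suppose the representation kernel q is invariant under f: q (f x) z = q x z for all x, z. Then the marginal representation distributions coincide: pZ d z = pZ d' z for all z. -/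
/-- If a bijection `f` of the data space transports each class-conditional data distribution
of domain `d` to that of domain `d'`, the label distribution is invariant, and the
representation kernel is invariant under `f`, then the marginal representation
distributions of the two domains coincide. -/
theorem marginal_alignment_of_invariant_kernel
    {D Y Z X : Type*} [Fintype D] [Fintype Y] [Fintype Z] [Fintype X]
    (d d' : D)
    (pY : D → Y → ℝ) (pX : D → Y → X → ℝ) (q : X → Z → ℝ)
    (hpY_nonneg : ∀ d y, 0 ≤ pY d y) (hpY_sum : ∀ d, ∑ y, pY d y = 1)
    (hpX_nonneg : ∀ d y x, 0 ≤ pX d y x) (hpX_sum : ∀ d y, ∑ x, pX d y x = 1)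
    (hq_nonneg : ∀ x z, 0 ≤ q x z) (hq_sum : ∀ x, ∑ z, q x z = 1)
    (pZ : D → Z → ℝ) (hpZ : ∀ d z, pZ d z = ∑ y, ∑ x, pY d y * pX d y x * q x z)
    (f : X ≃ X) (htrans : ∀ y x, pX d y x = pX d' y (f x))
    (hlabel : ∀ y, pY d y = pY d' y)
    (hinv : ∀ x z, q (f x) z = q x z) :
    ∀ z, pZ d z = pZ d' z := by
  intro z
  rw [hpZ, hpZ]
  refine Finset.sum_congr rfl fun y _ => ?_
  -- For each label, the change of variables `x ↦ f x` matches the two sums over the data space.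
  exact Fintype.sum_equiv f _ _ fun x => by rw [hlabel, htrans, hinv]
end
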